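/- arXiv:1003.3283 — 2 statements merged into one kernel-verified Lean document; each statement's English description precedes it below -/
import Mathlib

section
/- Let α ∈ Δ̃_min. If the invariant subspace V_α = {v ∈ V : f_α(v) = v} is contained in some hyperplane H belonging to H_q, then H is not a wall of the alcove A; that is, V_α is not contained in any of the hyperplanes H_β = {λ ∈ V : ⟨β,λ⟩ = m_β} for β ∈ Δ̃, where m_β = 0 for β ∈ Δ and m_{−α₀} = −1. (Indeed, the point λ^α ∈ A whose affine coordinates are 1/|⟨z_α⟩·β| on the ⟨z_α⟩-orbit of β and 0 on Δ̃ outside this orbit satisfies f_α(λ^α) = λ^α and λ^α ∉ H_β.) -/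
open scoped BigOperators

/-- Context: an irreducible reduced crystallographic root system `Φ ⊂ V*`, encoded through the
data attached to its extended Dynkin diagram `Δ̃` (indexed by `Dt`, with affine node `a0 = −α₀`):
marks `mark = n_β`, simple roots `srt β` (with `srt a0 = −α₀`), fundamental coweights
`omega β = ω_β∨` (with `omega a0 = 0`), affine coordinates `coord`, the Weyl group `W`,
the elements `z_α = zlin α` together with the permutation `zperm α` they induce on `Δ̃`,
the lattices `Q∨ = Qv ⊆ Y ⊆ P∨ = Pv`, the set `roots = Φ` of roots (as linear forms), and
the Frobenius data `q = p^m`, diagram automorphism `rho`, and linear isometry `F0`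
(so that `F = q·F0`). -/
structure AlcoveCtx (V : Type) [AddCommGroup V] [Module ℚ V]
    (Dt : Type) [Fintype Dt] [DecidableEq Dt] : Type where
  /-- the affine node `−α₀` of `Δ̃` -/
  a0 : Dt
  /-- the marks `n_β` (coefficients of the highest root, `n_{−α₀} = 1`) -/
  mark : Dt → ℕ
  mark_pos : ∀ b, 0 < mark b
  mark_a0 : mark a0 = 1
  /-- the roots indexed by `Δ̃`: for `b ≠ a0` the simple root `b`, and `srt a0 = −α₀` -/
  srt : Dt → (V →ₗ[ℚ] ℚ)
  /-- the fundamental coweights `ω_β∨`, with `ω_{−α₀}∨ = 0` -/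
  omega : Dt → V
  omega_a0 : omega a0 = 0
  /-- `⟨α, ω_β∨⟩ = δ_{αβ}` for `α, β ∈ Δ` -/
  pairing : ∀ b c, b ≠ a0 → c ≠ a0 → srt b (omega c) = (if b = c then (1 : ℚ) else 0)
  /-- `−α₀ = −Σ_{α∈Δ} n_α α` -/
  srt_a0 : srt a0 = - ∑ b ∈ Finset.univ.erase a0, (mark b : ℚ) • srt b
  /-- `(ω_α∨)_{α∈Δ}` is a basis of `V`, dual to `Δ` -/
  expansion : ∀ v : V, v = ∑ b ∈ Finset.univ.erase a0, srt b v • omega b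
  /-- the affine coordinates `(λ_β)_{β∈Δ̃}` -/
  coord : V → Dt → ℚ
  coord_def : ∀ v b, coord v b =
    if b = a0 then 1 + srt a0 v else (mark b : ℚ) * srt b v
  /-- `z_α = w_α w₀ ∈ W` (trivial for `α = −α₀`), as a linear automorphism of `V` -/
  zlin : Dt → (V ≃ₗ[ℚ] V)
  zlin_a0 : zlin a0 = LinearEquiv.refl ℚ V
  /-- the permutation of `Δ̃` induced by `z_α` -/
  zperm : Dt → Equiv.Perm Dt
  zperm_a0 : zperm a0 = 1
  /-- `f_α = z_α + ω_α∨` permutes the affine coordinates according to `z_α`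
  (for `α ∈ Δ̃_min`) -/
  coord_f : ∀ a, mark a = 1 → ∀ v b,
    coord (zlin a v + omega a) b = coord v ((zperm a)⁻¹ b)
  /-- the set `Φ` of roots, as linear forms on `V` -/
  roots : Set (V →ₗ[ℚ] ℚ)
  srt_mem_roots : ∀ b, b ≠ a0 → srt b ∈ roots
  /-- the Weyl group `W`, acting linearly on `V` -/
  W : Subgroup (V ≃ₗ[ℚ] V)
  zlin_mem_W : ∀ a, zlin a ∈ W
  /-- the coroot lattice `Q∨ = ℤΦ∨` -/
  Qv : AddSubgroup V
  /-- the coweight lattice `P∨` -/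
  Pv : AddSubgroup V
  /-- an intermediate `W`-stable lattice `Q∨ ⊆ Y ⊆ P∨` -/
  Y : AddSubgroup V
  Qv_le_Y : Qv ≤ Y
  Y_le_Pv : Y ≤ Pv
  omega_mem_Pv : ∀ b, omega b ∈ Pv
  W_stab_Qv : ∀ w ∈ W, ∀ y ∈ Qv, w y ∈ Qv
  W_stab_Y : ∀ w ∈ W, ∀ y ∈ Y, w y ∈ Y
  /-- the characteristic `p` -/
  p : ℕ
  p_prime : p.Prime
  m : ℕ
  m_pos : 0 < m
  /-- the prime power `q = p^m` -/
  q : ℕ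
  q_eq : q = p ^ m
  /-- the diagram automorphism `ρ` of `Δ`, extended to `Δ̃` fixing `−α₀` -/
  rho : Equiv.Perm Dt
  rho_a0 : rho a0 = a0
  rho_mark : ∀ b, mark (rho b) = mark b
  /-- the linear isometry `F₀` of `V` with `F₀(ω_α∨) = ω_{ρ⁻¹(α)}∨` -/
  F0 : V ≃ₗ[ℚ] V
  F0_omega : ∀ b, F0 (omega b) = omega (rho⁻¹ b)

namespace AlcoveCtx

variable {V : Type} [AddCommGroup V] [Module ℚ V]
variable {Dt : Type} [Fintype Dt] [DecidableEq Dt]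
variable (C : AlcoveCtx V Dt)

/-- the fundamental alcove `A = {λ : ⟨α,λ⟩ ≥ 0 ∀ α∈Δ, ⟨α₀,λ⟩ ≤ 1}` -/
def alcove : Set V :=
  {v | (∀ b, b ≠ C.a0 → 0 ≤ C.srt b v) ∧ -(C.srt C.a0 v) ≤ 1}

/-- the affine transformation `f_α = z_α + ω_α∨` -/
def f (a : Dt) : V → V := fun v => C.zlin a v + C.omega a

/-- `f_α` as an affine automorphism of `V` -/
def fE (a : Dt) : V ≃ᵃ[ℚ] V :=
  (C.zlin a).toAffineEquiv.trans (AffineEquiv.constVAdd ℚ V (C.omega a))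

/-- the invariant subspace `V_α = {v : f_α(v) = v}` -/
def Vfix (a : Dt) : Set V := {v | C.f a v = v}

/-- the dimension of `V_α` (as an affine subspace) -/
noncomputable def vdim (a : Dt) : ℕ := Module.finrank ℚ (vectorSpan ℚ (C.Vfix a))

/-- the Frobenius `F = q·F₀` -/
def Fm : V → V := fun v => (C.q : ℚ) • C.F0 v

/-- the inverse `F⁻¹ = (1/q)·F₀⁻¹` of the Frobenius -/
def Fi : V → V := fun v => ((C.q : ℚ))⁻¹ • C.F0.symm v

/-- the alcove `A_q = F⁻¹(A)` of the affine Weyl group `W_{a,q}` -/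
def Aq : Set V := C.Fm ⁻¹' C.alcove

/-- membership in `W_{a,q} = F⁻¹(Q∨) ⋊ W`: `g = (translation by t) ∘ w` with
`w ∈ W` and `F(t) ∈ Q∨` -/
def isWaq (g : V ≃ᵃ[ℚ] V) : Prop :=
  ∃ w ∈ C.W, ∃ t : V, C.Fm t ∈ C.Qv ∧ ∀ v, g v = w v + t

/-- membership in `E_q = {ω ∈ W_{a,q} : ω(A_q) ⊆ A}` -/
def inEq (g : V ≃ᵃ[ℚ] V) : Prop := C.isWaq g ∧ ⇑g '' C.Aq ⊆ C.alcove

/-- the set `H_q` of reflecting hyperplanes of the affine reflections of `W_{a,q}`: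
the hyperplanes `{v : α(v) = k/q}` for `α ∈ Φ` and `k ∈ ℤ` -/
def Hq : Set (Set V) :=
  {H | ∃ φ ∈ C.roots, ∃ k : ℤ, H = {v : V | φ v = (k : ℚ) / (C.q : ℚ)}}

/-- `f_{α,q} = z_{ρ(α)} + (1/q) ω_{ρ(α)}∨` -/
def fq (a : Dt) : V → V :=
  fun v => C.zlin (C.rho a) v + ((C.q : ℚ))⁻¹ • C.omega (C.rho a)

/-- the `W̄_a`-orbit of a point, where `W̄_a = Y ⋊ W` -/
def orbitOf (x : V) : Set V := {y | ∃ w ∈ C.W, ∃ t ∈ C.Y, y = w x + t}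

/-- the subset `ℚ_{p'} ⊗_ℤ Y` of `V` -/
def QpY : Set V := {v | ∃ k : ℕ, 0 < k ∧ ¬ C.p ∣ k ∧ k • v ∈ C.Y}

/-- `α ∈ Δ̃_{min,G}`, i.e. `n_α = 1` and `z_α ∈ 𝒜_G` (equivalently `ω_α∨ ∈ Y`) -/
def minG (a : Dt) : Prop := C.mark a = 1 ∧ C.omega a ∈ C.Y

/-- the `Γ_G`-orbit of a point, where `Γ_G = {f_α : α ∈ Δ̃_{min,G}}` -/
def gammaOrbit (x : V) : Set V := {y | ∃ b, C.minG b ∧ y = C.f b x}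

end AlcoveCtx

/-- For `α ∈ Δ̃_min`: if the invariant subspace `V_α` is contained in some
hyperplane `H ∈ H_q`, then `H` is not a wall of the alcove `A`; that is, `V_α` is not contained
in any of the hyperplanes `H_β = {λ : ⟨β,λ⟩ = m_β}` for `β ∈ Δ̃`, where `m_β = 0` for `β ∈ Δ`
and `m_{−α₀} = −1`. -/
theorem statement2 {V Dt : Type} [AddCommGroup V] [Module ℚ V]
    [Fintype Dt] [DecidableEq Dt] (C : AlcoveCtx V Dt) (a : Dt) (ha : C.mark a = 1) :
    (∀ H ∈ C.Hq, C.Vfix a ⊆ H →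
      ∀ b : Dt, H ≠ {v : V | C.srt b v = (if b = C.a0 then (-1 : ℚ) else 0)}) ∧
    (∀ b : Dt, ¬ (C.Vfix a ⊆ {v : V | C.srt b v = (if b = C.a0 then (-1 : ℚ) else 0)})) := by
  have hmark : ∀ b, (C.mark b : ℚ) ≠ 0 := fun b => by
    exact_mod_cast (C.mark_pos b).ne'
  have hNpos : 0 < Fintype.card Dt := Fintype.card_pos_iff.mpr ⟨C.a0⟩
  obtain ⟨N, hN⟩ : ∃ N : ℚ, N = (Fintype.card Dt : ℚ) := ⟨_, rfl⟩
  have hN0 : N ≠ 0 := by rw [hN]; exact_mod_cast hNpos.ne'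
  obtain ⟨v, hv⟩ : ∃ v : V, v = ∑ c ∈ Finset.univ.erase C.a0,
      (N * (C.mark c : ℚ))⁻¹ • C.omega c := ⟨_, rfl⟩
  have hs : ∀ b, b ≠ C.a0 → C.srt b v = (N * (C.mark b : ℚ))⁻¹ := by
    intro b hb
    rw [hv, map_sum, Finset.sum_eq_single b]
    · rw [map_smul, C.pairing b b hb hb]; simp
    · intro c hc hcb
      rw [map_smul, C.pairing b c hb (Finset.ne_of_mem_erase hc), if_neg (Ne.symm hcb)]
      simp
    · intro h
      exact absurd (Finset.mem_erase.mpr ⟨hb, Finset.mem_univ b⟩) h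
  have hs0 : C.srt C.a0 v = - ((N - 1) * N⁻¹) := by
    rw [C.srt_a0]
    simp only [LinearMap.neg_apply, LinearMap.sum_apply, LinearMap.smul_apply, smul_eq_mul]
    have h1 : ∀ b ∈ Finset.univ.erase C.a0, (C.mark b : ℚ) * C.srt b v = N⁻¹ := by
      intro b hb
      rw [hs b (Finset.ne_of_mem_erase hb)]
      have := hmark b
      field_simp
    rw [Finset.sum_congr rfl h1, Finset.sum_const, Finset.card_erase_of_mem (Finset.mem_univ _),
      Finset.card_univ, nsmul_eq_mul, Nat.cast_sub hNpos, hN]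
    simp
  have hc : ∀ b, C.coord v b = N⁻¹ := by
    intro b
    rw [C.coord_def]
    split_ifs with hb
    · rw [hs0]; field_simp; ring
    · rw [hs b hb]
      have := hmark b
      field_simp
  have hfix : v ∈ C.Vfix a := by
    change C.zlin a v + C.omega a = v
    have key : ∀ b, b ≠ C.a0 → C.srt b (C.zlin a v + C.omega a) = C.srt b v := by
      intro b hb
      have h := C.coord_f a ha v b
      rw [hc, ← hc b, C.coord_def, C.coord_def, if_neg hb, if_neg hb] at h
      exact mul_left_cancel₀ (hmark b) h
    rw [C.expansion (C.zlin a v + C.omega a)]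
    conv_rhs => rw [C.expansion v]
    exact Finset.sum_congr rfl fun b hb => by rw [key b (Finset.ne_of_mem_erase hb)]
  have main : ∀ b : Dt,
      ¬ (C.Vfix a ⊆ {v : V | C.srt b v = (if b = C.a0 then (-1 : ℚ) else 0)}) := by
    intro b hsub
    have h : C.srt b v = (if b = C.a0 then (-1 : ℚ) else 0) := hsub hfix
    have h2 := hc b
    rw [C.coord_def] at h2
    have h3 : N⁻¹ ≠ 0 := inv_ne_zero hN0
    by_cases hb : b = C.a0
    · subst hb
      rw [if_pos rfl] at h h2
      rw [h] at h2
      exact h3 (by rw [← h2]; norm_num)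
    · rw [if_neg hb] at h h2
      rw [h] at h2
      exact h3 (by rw [← h2]; ring)
  exact ⟨fun H _ hH b hb => main b (hb ▸ hH), main⟩
end

section
/- Let H = GC be a finite central product, i.e. G and C are subgroups of the finite group H with H = GC, every element of G commuting with every element of C, and Z = G ∩ C. Assume C is abelian, and let τ be an automorphism of H with τ(G) = G and τ(C) = C. Let χ be a τ-invariant complex irreducible character of G, and let ν ∈ Irr(Z) be the character with Res_Z(χ) = χ(1)·ν. If ν extends to a τ-invariant linear character of C, then the number of τ-invariant irreducible characters of H lying over χ (i.e. θ ∈ Irr(H) with ⟨Res_G(θ), χ⟩ ≠ 0 and θ∘τ = θ) equals the number of τ-fixed elements of the quotient group C/Z: |Irr(H | χ)^τ| = |(C/Z)^τ|. -/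
open scoped BigOperators

/-- The set of irreducible complex characters of a finite group `G`: the characters of the
simple objects of `FDRep ℂ G`. -/
noncomputable def IrrChar (G : Type) [Group G] : Set (G → ℂ) :=
  {χ | ∃ ρ : FDRep ℂ G, CategoryTheory.Simple ρ ∧ χ = ρ.character}

open CategoryTheory in
lemma aux_simple_iff {G : Type} [Group G] [Finite G] (V : FDRep ℂ G) :
    Simple V ↔ Module.finrank ℂ (Representation.linHom V.ρ V.ρ).invariants = 1 := by
  rw [FDRep.simple_iff_end_is_rank_one,
    (Representation.linHom.invariantsEquivFDRepHom V V).finrank_eq]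

lemma aux_mem_inv {G V : Type} [Group G] [AddCommGroup V] [Module ℂ V]
    (ρ : Representation ℂ G V) (f : V →ₗ[ℂ] V) :
    f ∈ (Representation.linHom ρ ρ).invariants ↔ ∀ g, ρ g * f = f * ρ g := by
  constructor
  · intro h g
    have h1 := h g
    rw [Representation.linHom_apply] at h1
    have h2 : ρ g * (f * ρ g⁻¹) = f := h1
    calc ρ g * f = ρ g * (f * (ρ g⁻¹ * ρ g)) := by rw [← map_mul]; simp
      _ = ρ g * (f * ρ g⁻¹) * ρ g := by simp only [mul_assoc]
      _ = _ := by rw [h2]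
  · intro h g
    rw [Representation.linHom_apply]
    change ρ g * (f * ρ g⁻¹) = f
    rw [← mul_assoc, h, mul_assoc, ← map_mul]; simp

lemma aux_schur {G : Type} [Group G] [Finite G] (V : FDRep ℂ G) (hV : CategoryTheory.Simple V)
    (z : G) (hz : ∀ g, g * z = z * g) : ∃ a : ℂ, V.ρ z = a • 1 := by
  rw [aux_simple_iff] at hV
  have h1 : (1 : V →ₗ[ℂ] V) ∈ (Representation.linHom V.ρ V.ρ).invariants := by
    rw [aux_mem_inv]; intro g; simp
  have h2 : V.ρ z ∈ (Representation.linHom V.ρ V.ρ).invariants := by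
    rw [aux_mem_inv]; intro g; rw [← map_mul, ← map_mul, hz]
  by_cases h0 : (1 : V →ₗ[ℂ] V) = 0
  · exact ⟨0, by rw [← mul_one (V.ρ z), h0]; simp⟩
  · have := (finrank_eq_one_iff_of_nonzero' (⟨1, h1⟩ : (Representation.linHom V.ρ V.ρ).invariants)
      (by simpa [Subtype.ext_iff] using h0)).1 hV ⟨_, h2⟩
    obtain ⟨c, hc⟩ := this
    exact ⟨c, (congrArg Subtype.val hc).symm⟩

lemma aux_char_one_ne {G : Type} [Group G] [Finite G] (V : FDRep ℂ G)
    (hV : CategoryTheory.Simple V) : V.character 1 ≠ 0 := by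
  rw [aux_simple_iff] at hV
  rw [FDRep.char_one]
  intro h
  have h0 : Module.finrank ℂ V = 0 := by exact_mod_cast h
  have : Subsingleton V := Module.finrank_zero_iff.1 h0
  have : Subsingleton (Representation.linHom V.ρ V.ρ).invariants :=
    ⟨fun a b => Subtype.ext (LinearMap.ext fun x => Subsingleton.elim _ _)⟩
  rw [Module.finrank_zero_of_subsingleton] at hV
  omega

lemma aux_res {H : Type} [Group H] [Finite H] (G C : Subgroup H)
    (hgen : ∀ h : H, ∃ g ∈ G, ∃ c ∈ C, h = g * c)
    {V : Type} [AddCommGroup V] [Module ℂ V] [Module.Finite ℂ V] (σ : Representation ℂ H V)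
    (hs : ∀ c ∈ C, ∃ a : ℂ, σ c = a • 1) :
    CategoryTheory.Simple (FDRep.of σ) ↔
      CategoryTheory.Simple (FDRep.of (σ.comp G.subtype : Representation ℂ G V)) := by
  rw [aux_simple_iff, aux_simple_iff]
  have : (Representation.linHom (FDRep.of σ).ρ (FDRep.of σ).ρ).invariants =
     (Representation.linHom (FDRep.of (σ.comp G.subtype : Representation ℂ G V)).ρ
      (FDRep.of (σ.comp G.subtype : Representation ℂ G V)).ρ).invariants := by
    ext f
    rw [aux_mem_inv (V := V), aux_mem_inv (V := V), FDRep.of_ρ', FDRep.of_ρ']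
    constructor
    · intro h g
      exact h g
    · intro h x
      obtain ⟨g, hg, c, hc, rfl⟩ := hgen x
      obtain ⟨a, ha⟩ := hs c hc
      have := h ⟨g, hg⟩
      simp only [MonoidHom.comp_apply, Subgroup.subtype_apply] at this
      rw [map_mul, ha]
      simp [this]
  rw [this]

open Matrix ComplexOrder in
lemma aux_matrix {G n : Type} [Group G] [Fintype G] [Fintype n] [DecidableEq n]
    (M : G →* Matrix n n ℂ) (g : G) : (M g⁻¹).trace = (starRingEnd ℂ) (M g).trace := by
  set P : Matrix n n ℂ := ∑ x, (M x)ᴴ * M x with hP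
  have hpos : P.PosDef := by
    refine Matrix.posDef_sum Finset.univ_nonempty fun x _ => ?_
    refine Matrix.PosDef.conjTranspose_mul_self _ ?_
    intro v w hvw
    have : M x⁻¹ *ᵥ (M x *ᵥ v) = M x⁻¹ *ᵥ (M x *ᵥ w) := congrArg _ hvw
    simpa [Matrix.mulVec_mulVec, ← map_mul] using this
  have hinv : (M g)ᴴ * P * M g = P := by
    rw [hP, Finset.mul_sum, Finset.sum_mul]
    refine Fintype.sum_equiv (Equiv.mulRight g) _ _ fun x => ?_
    simp [Matrix.conjTranspose_mul, Matrix.mul_assoc]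
  have hu : IsUnit P.det := (Matrix.isUnit_iff_isUnit_det _).1 hpos.isUnit
  have h1 : (M g)ᴴ * P = P * M g⁻¹ := by
    calc (M g)ᴴ * P = (M g)ᴴ * P * (M g * M g⁻¹) := by rw [← map_mul]; simp
      _ = (M g)ᴴ * P * M g * M g⁻¹ := by simp only [Matrix.mul_assoc]
      _ = _ := by rw [hinv]
  have h2 : M g⁻¹ = P⁻¹ * ((M g)ᴴ * P) := by
    rw [h1, ← Matrix.mul_assoc, Matrix.nonsing_inv_mul _ hu, Matrix.one_mul]
  rw [h2, Matrix.trace_mul_comm, Matrix.mul_assoc, Matrix.mul_nonsing_inv _ hu, Matrix.mul_one,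
    Matrix.trace_conjTranspose]
  rfl

lemma aux_char_inv {G : Type} [Group G] [Fintype G] (V : FDRep ℂ G) (g : G) :
    V.character g⁻¹ = (starRingEnd ℂ) (V.character g) := by
  let b := Module.finBasis ℂ V
  have := aux_matrix ((LinearMap.toMatrixAlgEquiv b).toRingEquiv.toMonoidHom.comp V.ρ) g
  unfold FDRep.character
  rw [LinearMap.trace_eq_matrix_trace ℂ b, LinearMap.trace_eq_matrix_trace ℂ b]
  exact this

lemma aux_count (C : Type) [CommGroup C] [Finite C] (Z : Subgroup C) (t : C →* C)
    (ht : ∀ z ∈ Z, t z ∈ Z) :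
    Nat.card {l : C →* ℂˣ // (∀ z ∈ Z, l z = 1) ∧ ∀ c, l (t c) = l c} =
    Nat.card {x : C ⧸ Z // ∃ c : C, x = QuotientGroup.mk c ∧
      (QuotientGroup.mk (t c) : C ⧸ Z) = x} := by
  let f : (C ⧸ Z) →* (C ⧸ Z) := QuotientGroup.map Z Z t ht / MonoidHom.id _
  have hf : ∀ c : C, f (QuotientGroup.mk c) = QuotientGroup.mk (t c) / QuotientGroup.mk c :=
    fun c => rfl
  have hR : Nat.card {x : C ⧸ Z // ∃ c : C, x = QuotientGroup.mk c ∧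
      (QuotientGroup.mk (t c) : C ⧸ Z) = x} = Nat.card f.ker := by
    refine Nat.card_congr (Equiv.subtypeEquivRight fun x => ?_)
    obtain ⟨c, rfl⟩ := QuotientGroup.mk_surjective x
    rw [MonoidHom.mem_ker, hf, div_eq_one]
    constructor
    · rintro ⟨d, h1, h2⟩
      have : QuotientGroup.map Z Z t ht (QuotientGroup.mk c) =
        QuotientGroup.map Z Z t ht (QuotientGroup.mk d) := by rw [h1]
      exact this.trans h2
    · intro h; exact ⟨c, rfl, h⟩
  have hL : Nat.card {l : C →* ℂˣ // (∀ z ∈ Z, l z = 1) ∧ ∀ c, l (t c) = l c} =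
      Nat.card (((C ⧸ Z) ⧸ f.range) →* ℂˣ) := by
    symm
    refine Nat.card_congr (Equiv.ofBijective (fun m => ⟨(m.comp (QuotientGroup.mk' _)).comp
      (QuotientGroup.mk' _), ?_, ?_⟩) ⟨?_, ?_⟩)
    · intro z hz
      have : (QuotientGroup.mk' Z) z = 1 := (QuotientGroup.eq_one_iff z).2 hz
      simp only [MonoidHom.comp_apply, this, map_one]
    · intro c
      have : (QuotientGroup.mk' f.range) (f (QuotientGroup.mk c)) = 1 :=
        (QuotientGroup.eq_one_iff _).2 ⟨_, rfl⟩
      rw [hf, map_div, div_eq_one] at this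
      exact congrArg m this
    · intro m m' h
      have h := congrArg Subtype.val h
      refine MonoidHom.ext fun y => ?_
      obtain ⟨y, rfl⟩ := QuotientGroup.mk_surjective y
      obtain ⟨x, rfl⟩ := QuotientGroup.mk_surjective y
      have := DFunLike.congr_fun h x
      exact this
    · rintro ⟨l, h1, h2⟩
      refine ⟨QuotientGroup.lift _ (QuotientGroup.lift Z l h1) ?_, ?_⟩
      · rintro _ ⟨x, rfl⟩
        obtain ⟨c, rfl⟩ := QuotientGroup.mk_surjective x
        rw [hf, MonoidHom.mem_ker, map_div, div_eq_one]
        exact h2 c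
      · rfl
  rw [hL, hR, CommGroup.card_monoidHom_of_hasEnoughRootsOfUnity]
  have e1 := Subgroup.card_eq_card_quotient_mul_card_subgroup f.range
  have e2 := Subgroup.card_eq_card_quotient_mul_card_subgroup f.ker
  rw [Nat.card_congr (QuotientGroup.quotientKerEquivRange f).toEquiv] at e2
  rw [e2, mul_comm] at e1
  exact (Nat.eq_of_mul_eq_mul_right Nat.card_pos e1).symm

lemma aux_A {H : Type} [Group H] [Fintype H] (G C : Subgroup H)
    (hcentral : ∀ g ∈ G, ∀ c ∈ C, g * c = c * g)
    (hgen : ∀ h : H, ∃ g ∈ G, ∃ c ∈ C, h = g * c)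
    (χ : ↥G → ℂ) (hχ : χ ∈ IrrChar ↥G) (μ : C →* ℂ)
    (hμ : ∀ (z : H) (hG : z ∈ G) (hC : z ∈ C), χ ⟨z, hG⟩ = χ 1 * μ ⟨z, hC⟩) :
    ∃ θ ∈ IrrChar H, ∀ (g : G) (c : C), θ (g * c) = χ g * μ c := by
  obtain ⟨V, hV, rfl⟩ := hχ
  have h1 := aux_char_one_ne V hV
  have hz : ∀ (z : H) (hG : z ∈ G) (hC : z ∈ C), V.ρ ⟨z, hG⟩ = μ ⟨z, hC⟩ • 1 := by
    intro z hG hC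
    obtain ⟨a, ha⟩ := aux_schur V hV ⟨z, hG⟩ (fun g => Subtype.ext (hcentral g g.2 z hC))
    have h2 := hμ z hG hC
    have h3 : V.character ⟨z, hG⟩ = a * V.character 1 := by
      simp only [FDRep.character, ha, map_one, map_smul, smul_eq_mul]
    rw [h3, mul_comm] at h2
    rw [ha, mul_left_cancel₀ h1 h2]
  have key : ∀ (g g' : G) (c c' : C), (g : H) * c = g' * c' → μ c • V.ρ g = μ c' • V.ρ g' := by
    intro g g' c c' h
    have hzz : (g' : H)⁻¹ * g = c' * (c : H)⁻¹ := by
      rw [inv_mul_eq_iff_eq_mul, ← mul_assoc, ← h]; simp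
    have hC : (g' : H)⁻¹ * g ∈ C := by rw [hzz]; exact C.mul_mem c'.2 (C.inv_mem c.2)
    have hG : (g' : H)⁻¹ * g ∈ G := G.mul_mem (G.inv_mem g'.2) g.2
    have e1 : g = g' * ⟨_, hG⟩ := Subtype.ext (by simp)
    have e2 : c' = ⟨_, hC⟩ * c := Subtype.ext (by simp [hzz])
    have e3 := hz _ hG hC
    rw [e2, map_mul μ]
    nth_rewrite 1 [e1]
    rw [map_mul V.ρ, e3, mul_smul_comm, mul_one, smul_smul, mul_comm]
  choose gg hgg cc hcc hh using hgen
  let σ : Representation ℂ H V :=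
    { toFun := fun h => μ ⟨cc h, hcc h⟩ • V.ρ ⟨gg h, hgg h⟩
      map_one' := by
        rw [key _ 1 _ 1 (by simp [← hh])]; simp
      map_mul' := by
        intro x y
        rw [key _ (⟨gg x, hgg x⟩ * ⟨gg y, hgg y⟩) _ (⟨cc x, hcc x⟩ * ⟨cc y, hcc y⟩)
          (by
            simp only [← hh, Subgroup.coe_mul]
            nth_rewrite 1 [hh x, hh y]
            rw [mul_assoc, mul_assoc, ← mul_assoc (cc x), ← hcentral _ (hgg y) _ (hcc x), mul_assoc])]
        rw [map_mul, map_mul, smul_mul_smul_comm] }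
  have hσ : ∀ (g : G) (c : C), σ (g * c) = μ c • V.ρ g := by
    intro g c
    exact key _ _ _ _ (hh _).symm
  refine ⟨(FDRep.of σ).character, ⟨FDRep.of σ, ?_, rfl⟩, ?_⟩
  · rw [aux_res G C (fun h => ⟨gg h, hgg h, cc h, hcc h, hh h⟩) σ]
    · have : (σ.comp G.subtype : Representation ℂ G V) = V.ρ := by
        refine MonoidHom.ext fun g => ?_
        have := hσ g 1
        simpa using this
      rw [aux_simple_iff] at hV ⊢
      rw [this]
      exact hV
    · intro c hc
      have := hσ 1 ⟨c, hc⟩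
      exact ⟨μ ⟨c, hc⟩, by simpa using this⟩
  · intro g c
    have : (FDRep.of σ).character (g * c) = LinearMap.trace ℂ V (σ (g * c)) := rfl
    rw [this, hσ, map_smul, smul_eq_mul, mul_comm]
    rfl

lemma aux_B {H : Type} [Group H] [Fintype H] (G C : Subgroup H) [Fintype G]
    (hcentral : ∀ g ∈ G, ∀ c ∈ C, g * c = c * g)
    (hgen : ∀ h : H, ∃ g ∈ G, ∃ c ∈ C, h = g * c)
    (hCab : ∀ x ∈ C, ∀ y ∈ C, x * y = y * x)
    (χ : ↥G → ℂ) (hχ : χ ∈ IrrChar ↥G) (θ : H → ℂ) (hθ : θ ∈ IrrChar H)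
    (hne : (∑ g : ↥G, θ (g : H) * (starRingEnd ℂ) (χ g)) ≠ 0) :
    ∃ μ : C →* ℂ, ∀ (g : G) (c : C), θ (g * c) = χ g * μ c := by
  obtain ⟨V, hV, rfl⟩ := hχ
  obtain ⟨W, hW, rfl⟩ := hθ
  have h1 := aux_char_one_ne W hW
  have hs : ∀ c : C, ∃ a : ℂ, W.ρ c = a • 1 := by
    intro c
    refine aux_schur W hW c fun h => ?_
    obtain ⟨g, hg, d, hd, rfl⟩ := hgen h
    rw [mul_assoc, hCab d hd c c.2, ← mul_assoc, hcentral g hg c c.2, mul_assoc]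
  choose a ha using hs
  let W' : FDRep ℂ G := FDRep.of (W.ρ.comp G.subtype : Representation ℂ G W)
  have hW' : CategoryTheory.Simple W' := by
    refine (aux_res G C hgen W.ρ fun c hc => ⟨_, ha ⟨c, hc⟩⟩).1 ?_
    rw [aux_simple_iff] at hW ⊢
    exact hW
  have hch : ∀ g : G, W'.character g = W.character g := fun g => rfl
  have hiso : W'.character = V.character := by
    classical
    have := invertibleOfNonzero (NeZero.ne (Nat.card G : ℂ))
    have h := FDRep.char_orthonormal W' V
    by_cases hi : Nonempty (W' ≅ V)
    · exact FDRep.char_iso hi.some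
    · rw [if_neg hi] at h
      exfalso
      simp only [aux_char_inv, hch] at h
      exact (mul_ne_zero (inv_ne_zero (NeZero.ne (Nat.card G : ℂ))) hne) h
  have hca : ∀ (x : H) (c : C), W.character (x * c) = W.character x * a c := by
    intro x c
    simp only [FDRep.character, map_mul, ha, mul_smul_comm, mul_one, map_smul, smul_eq_mul]
    rw [mul_comm]
  refine ⟨⟨⟨a, ?_⟩, ?_⟩, ?_⟩
  · have := hca 1 1
    apply mul_left_cancel₀ h1
    rw [← this]; simp
  · intro c d
    have e1 := hca 1 (c * d)
    have e2 := hca (1 * c) d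
    rw [hca 1 c] at e2
    apply mul_left_cancel₀ h1
    simp only
    rw [← e1, ← mul_assoc, ← e2, Subgroup.coe_mul, mul_assoc]
  · intro g c
    rw [hca, ← hch, hiso]
    rfl

/-- Let `H = GC` be a finite central product with `Z = G ∩ C`, `C` abelian,
and `τ` an automorphism of `H` stabilizing `G` and `C`. Let `χ` be a `τ`-invariant irreducible
character of `G` with central character `ν` on `Z` (`Res_Z χ = χ(1)·ν`). If `ν` extends to a
`τ`-invariant linear character of `C`, then the number of `τ`-invariant irreducible characters
of `H` lying over `χ` equals the number of `τ`-fixed elements of `C/Z`. -/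
theorem statement13
    (H : Type) [Group H] [Fintype H]
    (G C : Subgroup H) [Fintype ↥G]
    -- central product: every element of `G` commutes with every element of `C`, `H = GC`
    (hcentral : ∀ g ∈ G, ∀ c ∈ C, g * c = c * g)
    (hgen : ∀ h : H, ∃ g ∈ G, ∃ c ∈ C, h = g * c)
    -- `C` is abelian
    (hCab : ∀ x ∈ C, ∀ y ∈ C, x * y = y * x)
    -- the automorphism `τ`, stabilizing `G` and `C`
    (τ : H ≃* H) (hτG : ∀ g ∈ G, τ g ∈ G) (hτC : ∀ c ∈ C, τ c ∈ C)
    -- a `τ`-invariant irreducible character `χ` of `G`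
    (χ : ↥G → ℂ) (hχ : χ ∈ IrrChar ↥G)
    (hχτ : ∀ g : ↥G, χ ⟨τ g, hτG g g.2⟩ = χ g)
    -- the central character `ν` of `χ` on `Z = G ⊓ C`
    (ν : ↥(G ⊓ C) →* ℂ)
    (hν : ∀ z : ↥(G ⊓ C), χ ⟨(z : H), (Subgroup.mem_inf.mp z.2).1⟩ = χ 1 * ν z)
    -- `ν` extends to a `τ`-invariant linear character of `C`
    (hext : ∃ νC : ↥C →* ℂ,
      (∀ z : ↥(G ⊓ C), νC ⟨(z : H), (Subgroup.mem_inf.mp z.2).2⟩ = ν z) ∧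
      (∀ c : ↥C, νC ⟨τ c, hτC c c.2⟩ = νC c)) :
    Nat.card {θ : H → ℂ // θ ∈ IrrChar H ∧
        (∑ g : ↥G, θ (g : H) * (starRingEnd ℂ) (χ g)) ≠ 0 ∧
        (∀ h : H, θ (τ h) = θ h)} =
    Nat.card {x : ↥C ⧸ (G ⊓ C).subgroupOf C // ∃ c : ↥C,
        x = QuotientGroup.mk c ∧
        (QuotientGroup.mk (⟨τ c, hτC c c.2⟩ : ↥C) :
          ↥C ⧸ (G ⊓ C).subgroupOf C) = x} := by
  classical
  obtain ⟨νC, hνC, hνCτ⟩ := hext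
  letI : CommGroup C := { (inferInstance : Group C) with
    mul_comm := fun x y => Subtype.ext (hCab x x.2 y y.2) }
  have hχ1 : χ 1 ≠ 0 := by
    obtain ⟨V, hV, rfl⟩ := id hχ
    exact aux_char_one_ne V hV
  let t : C →* C :=
    { toFun := fun c => ⟨τ c, hτC c c.2⟩
      map_one' := Subtype.ext (by simp)
      map_mul' := fun x y => Subtype.ext (by simp) }
  have hcount := aux_count C ((G ⊓ C).subgroupOf C) t (by
    intro z hz
    rw [Subgroup.mem_subgroupOf] at hz ⊢
    exact ⟨hτG _ hz.1, hτC _ hz.2⟩)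
  refine Eq.trans ?_ hcount
  symm
  have hunit : ∀ c : C, νC c ≠ 0 := fun c => by
    have : νC c * νC c⁻¹ = 1 := by rw [← map_mul]; simp
    exact left_ne_zero_of_mul_eq_one this
  have hA : ∀ l : {l : C →* ℂˣ // (∀ z ∈ (G ⊓ C).subgroupOf C, l z = 1) ∧
      ∀ c, l (t c) = l c}, ∃ θ ∈ IrrChar H, ∀ (g : G) (c : C),
        θ (g * c) = χ g * (νC c * (l.1 c : ℂ)) := by
    intro l
    refine aux_A G C hcentral hgen χ hχ (νC * (Units.coeHom ℂ).comp l.1) ?_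
    intro z hG hC
    have e1 := hν ⟨z, hG, hC⟩
    have e2 := hνC ⟨z, hG, hC⟩
    have e3 := l.2.1 ⟨z, hC⟩ ⟨hG, hC⟩
    simp only [MonoidHom.mul_apply, MonoidHom.comp_apply, Units.coeHom_apply, e3]
    rw [e1, ← e2]; simp
  choose F hF1 hF2 using hA
  have hFG : ∀ l (g : G), F l g = χ g := by
    intro l g
    have := hF2 l g 1
    simpa using this
  have hext' : ∀ θ θ' : H → ℂ, (∀ (g : G) (c : C), θ (g * c) = θ' (g * c)) → θ = θ' := by
    intro θ θ' h
    funext x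
    obtain ⟨g, hg, c, hc, rfl⟩ := hgen x
    exact h ⟨g, hg⟩ ⟨c, hc⟩
  refine Nat.card_congr (Equiv.ofBijective (fun l => ⟨F l, hF1 l, ?_, ?_⟩) ⟨?_, ?_⟩)
  · simp only [hFG, Complex.mul_conj]
    rw [← Complex.ofReal_sum, Complex.ofReal_ne_zero]
    refine (Finset.sum_pos' (fun g _ => Complex.normSq_nonneg _)
      ⟨1, Finset.mem_univ _, Complex.normSq_pos.2 hχ1⟩).ne'
  · intro h
    obtain ⟨g, hg, c, hc, rfl⟩ := hgen h
    have e1 := hF2 l ⟨τ g, hτG g hg⟩ ⟨τ c, hτC c hc⟩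
    have e2 := hF2 l ⟨g, hg⟩ ⟨c, hc⟩
    have e3 := hχτ ⟨g, hg⟩
    have e4 := hνCτ ⟨c, hc⟩
    have e5 : l.1 ⟨τ c, hτC c hc⟩ = l.1 ⟨c, hc⟩ := l.2.2 ⟨c, hc⟩
    simp only at e1 e2 e3 e4
    rw [map_mul, e1, e2, e3, e4, e5]
  · intro l l' h
    have h : F l = F l' := congrArg Subtype.val h
    refine Subtype.ext (MonoidHom.ext fun c => Units.ext ?_)
    have e1 := hF2 l 1 c
    rw [h, hF2 l' 1 c] at e1
    exact (mul_left_cancel₀ (hunit c) (mul_left_cancel₀ hχ1 e1)).symm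
  · rintro ⟨θ, hθ, hne, hθτ⟩
    obtain ⟨μ, hμ⟩ := aux_B G C hcentral hgen hCab χ hχ θ hθ hne
    let l : C →* ℂˣ := μ.toHomUnits / νC.toHomUnits
    have hl : ∀ c, (l c : ℂ) = μ c / νC c := fun c => by
      simp [l, MonoidHom.div_apply, Units.val_div_eq_div_val]
    have hl1 : ∀ z ∈ (G ⊓ C).subgroupOf C, l z = 1 := by
      intro z hz
      have hz' : (z : H) ∈ G := hz.1
      apply Units.ext
      rw [hl, Units.val_one, div_eq_one_iff_eq (hunit z)]
      have e1 := hμ 1 z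
      have e2 := hμ ⟨z, hz'⟩ 1
      have e3 := hν ⟨z, hz⟩
      have e4 := hνC ⟨z, hz⟩
      simp only [OneMemClass.coe_one, one_mul, mul_one, map_one] at e1 e2
      rw [e1] at e2
      apply mul_left_cancel₀ hχ1
      rw [e2]
      exact e3.trans (by rw [← e4])
    have hl2 : ∀ c, l (t c) = l c := by
      intro c
      apply Units.ext
      rw [hl, hl]
      have e1 := hμ 1 c
      have e2 := hμ 1 (t c)
      have e3 := hνCτ c
      have e4 := hθτ c
      simp only [OneMemClass.coe_one, one_mul] at e1 e2
      have e5 : θ (τ c) = χ 1 * μ (t c) := e2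
      rw [e4, e1] at e5
      rw [← mul_left_cancel₀ hχ1 e5]
      exact congrArg _ e3
    refine ⟨⟨l, hl1, hl2⟩, Subtype.ext (hext' _ _ fun g c => ?_)⟩
    simp only
    rw [hF2, hμ, hl, mul_div_cancel₀ _ (hunit c)]
end
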